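/- arXiv:0707.3104 — 11 statements merged into one kernel-verified Lean document; each statement's English description precedes it below -/
import Mathlib

section
/- Let m ≥ 1 and 0 ≤ l ≤ m be integers. Then the 2-adic valuation of A_{l,m} is given by ν₂(A_{l,m}) = ν₂((m+1−l)·(m+2−l)⋯(m+l)) + l, where the product (m+1−l)_{2l} has 2l consecutive factors starting at m+1−l. Equivalently, stated without the division by 2^{m−l}: ν₂(l! · m! · b_{l,m}) = (m − l) + l + ν₂((m+l)!/(m−l)!). -/
/-- The sequence `b_{l,m}` from the paper. -/
def blm (l m : ℕ) : ℕ :=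
  ∑ k ∈ Finset.Icc l m,
    2 ^ k * Nat.choose (2 * m - 2 * k) (m - k) * Nat.choose (m + k) m * Nat.choose k l

namespace BM

/-- coefficient of `(1+a)^k`. -/
def t (m k : ℕ) : ℕ := 2 ^ k * Nat.choose (2 * m - 2 * k) (m - k) * Nat.choose (m + k) m

/-- `l! b_{l,m}` as an integer. -/
def F (m l : ℕ) : ℤ := ∑ k ∈ Finset.range (m + 1), (t m k : ℤ) * (k.descFactorial l : ℤ)

/-- the Pochhammer product. -/
def p (m l : ℕ) : ℤ := ∏ i ∈ Finset.range l, ((m : ℤ) - i) * (m + i + 1)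

lemma t_rec (m k : ℕ) (h : k < m) :
    ((k : ℤ) + 1) * (2 * m - 1 - 2 * k) * t m (k + 1) = (m - k) * (m + k + 1) * t m k := by
  obtain ⟨n, rfl⟩ := Nat.exists_eq_add_of_lt h
  have e1 : 2 * (k + n + 1) - 2 * (k + 1) = 2 * n := by omega
  have e2 : k + n + 1 - (k + 1) = n := by omega
  have e3 : 2 * (k + n + 1) - 2 * k = 2 * (n + 1) := by omega
  have e4 : k + n + 1 - k = n + 1 := by omega
  unfold t
  rw [e1, e2, e3, e4]
  have h1 := Nat.succ_mul_centralBinom_succ n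
  rw [Nat.centralBinom, Nat.centralBinom] at h1
  have h2 : Nat.choose (k + n + 1 + (k + 1)) (k + n + 1) * (k + 1)
      = (k + n + 1 + k + 1) * Nat.choose (k + n + 1 + k) (k + n + 1) := by
    have := Nat.choose_mul_succ_eq (k + n + 1 + k) (k + n + 1)
    have e : k + n + 1 + k + 1 - (k + n + 1) = k + 1 := by omega
    rw [e] at this
    rw [← add_assoc, ← this]; ring
  zify at h1 h2
  push_cast
  generalize (Nat.choose (2 * (n + 1)) (n + 1) : ℤ) = x at *
  generalize (Nat.choose (2 * n) n : ℤ) = y at *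
  generalize (Nat.choose (k + n + 1 + (k + 1)) (k + n + 1) : ℤ) = z at *
  generalize (Nat.choose (k + n + 1 + k) (k + n + 1) : ℤ) = w at *
  rw [pow_succ]
  linear_combination (2 ^ k * 2 * y * (2 * n + 1)) * h2
    - (2 ^ k * w * (2 * k + n + 2)) * h1

lemma desc_succ (k l : ℕ) :
    ((k.descFactorial (l + 1) : ℕ) : ℤ) = ((k : ℤ) - l) * k.descFactorial l := by
  rw [Nat.descFactorial_succ]
  rcases le_or_gt l k with h | h
  · push_cast [h]; ring
  · rw [Nat.descFactorial_of_lt h]; simp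

lemma F_rec (m l : ℕ) :
    ((m : ℤ) - l) * (m + l + 1) * F m l = (2 * m + 1) * F m (l + 1) - F m (l + 2) := by
  have key : ∑ k ∈ Finset.range (m + 1),
        ((m : ℤ) - k) * (m + k + 1) * t m k * (k.descFactorial l : ℤ)
      = ∑ k ∈ Finset.range (m + 1),
        (2 * (m : ℤ) + 1 - 2 * k) * t m k * (k.descFactorial (l + 1) : ℤ) := by
    rw [Finset.sum_range_succ, Finset.sum_range_succ' _ m]
    simp only [sub_self, zero_mul, add_zero, Nat.zero_descFactorial_succ, Nat.cast_zero, mul_zero]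
    apply Finset.sum_congr rfl
    intro k hk
    rw [← t_rec m k (Finset.mem_range.1 hk), Nat.succ_descFactorial_succ]
    push_cast
    ring
  rw [← sub_eq_zero, ← Finset.sum_sub_distrib] at key
  rw [← sub_eq_zero, ← key]
  unfold F
  rw [Finset.mul_sum, Finset.mul_sum, ← Finset.sum_sub_distrib, ← Finset.sum_sub_distrib]
  apply Finset.sum_congr rfl
  intro k _
  rw [desc_succ k (l + 1), desc_succ k l]
  push_cast
  ring

lemma F_eq (m l : ℕ) : F m l = ((l.factorial * blm l m : ℕ) : ℤ) := by
  unfold F blm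
  rw [Finset.mul_sum]
  push_cast
  symm
  apply Finset.sum_subset_zero_on_sdiff
  · intro k hk; simp at *; omega
  · intro k hk
    simp at hk
    rw [Nat.descFactorial_of_lt (by omega)]; simp
  · intro k _
    rw [Nat.descFactorial_eq_factorial_mul_choose, t]
    push_cast
    ring

lemma p_eq (m l : ℕ) (h : l ≤ m) : p m l * (m - l).factorial = (m + l).factorial := by
  induction l with
  | zero => simp [p]
  | succ l ih =>
    rw [← add_assoc, Nat.factorial_succ]
    push_cast
    rw [← ih (by omega)]
    have e : m - l = (m - (l + 1)) + 1 := by omega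
    rw [e, Nat.factorial_succ, ← e, p, Finset.prod_range_succ, ← p]
    push_cast [show l ≤ m by omega]
    ring

lemma p_succ (m l : ℕ) : p m (l + 1) = p m l * (((m : ℤ) - l) * (m + l + 1)) := by
  rw [p, Finset.prod_range_succ, ← p]

lemma main (m j : ℕ) : ∀ l, l + j = m → ∃ c c' : ℤ, Odd c ∧
    m.factorial * F m l = 2 ^ m * p m l * c ∧
    m.factorial * F m (l + 1) = 2 ^ m * p m (l + 1) * c' := by
  induction j with
  | zero =>
    rintro l rfl
    refine ⟨1, 0, odd_one, ?_, ?_⟩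
    · have h := p_eq l l le_rfl
      simp only [Nat.sub_self, Nat.factorial_zero, Nat.cast_one, mul_one] at h
      simp only [add_zero]
      rw [F_eq, h, blm]
      have h2 := Nat.add_choose_mul_factorial_mul_factorial l l
      simp
      zify at h2
      rw [← h2]; ring
    · rw [F_eq, blm]; simp
  | succ j ih =>
    intro l hl
    obtain ⟨c, c', hc, h1, h2⟩ := ih (l + 1) (by omega)
    refine ⟨(2 * m + 1) * c - ((m : ℤ) - (l + 1)) * (m + (l + 1) + 1) * c', c, ?_, ?_, h1⟩
    · refine Odd.sub_even (Odd.mul ⟨m, rfl⟩ hc) (Even.mul_right ?_ _)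
      rw [Int.even_mul]
      simp only [Int.even_add, Int.even_sub, Int.even_coe_nat]
      simp
      tauto
    · have hq : ((m : ℤ) - l) * (m + l + 1) ≠ 0 := by
        have : (l : ℤ) + 1 ≤ m := by omega
        apply mul_ne_zero <;> omega
      apply mul_left_cancel₀ hq
      have hr := F_rec m l
      have e2 := p_succ m (l + 1)
      have e1 := p_succ m l
      rw [e2] at h2
      push_cast at h2
      rw [e1] at h1 h2
      rw [show l + 1 + 1 = l + 2 from rfl] at h2
      linear_combination (m.factorial : ℤ) * hr + (2 * m + 1) * h1 - h2

end BM

/-- ν₂(l!·m!·b_{l,m}) = (m − l) + l + ν₂((m+l)!/(m−l)!), i.e.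
ν₂(A_{l,m}) = ν₂((m+1−l)_{2l}) + l. -/
theorem nu2_A_pochhammer (m l : ℕ) (hm : 1 ≤ m) (hl : l ≤ m) :
    padicValNat 2 (Nat.factorial l * Nat.factorial m * blm l m) =
      (m - l) + l + padicValNat 2 (Nat.factorial (m + l) / Nat.factorial (m - l)) := by
  obtain ⟨c, -, hc, h, -⟩ := BM.main m (m - l) l (by omega)
  have hp := BM.p_eq m l hl
  obtain ⟨P, hP⟩ := Nat.factorial_dvd_factorial (show m - l ≤ m + l by omega)
  have hpos := Nat.factorial_pos (m - l)
  have hpP : BM.p m l = P := by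
    have : ((m - l).factorial : ℤ) ≠ 0 := by positivity
    apply mul_right_cancel₀ this
    rw [hp, hP]; push_cast; ring
  have hP0 : P ≠ 0 := by
    rintro rfl
    exact Nat.factorial_ne_zero _ hP
  rw [hP, Nat.mul_div_cancel_left _ hpos, Nat.sub_add_cancel hl]
  rw [BM.F_eq, hpP] at h
  have h' : Nat.factorial l * Nat.factorial m * blm l m = 2 ^ m * P * c.natAbs := by
    have := congrArg Int.natAbs h
    simp only [Int.natAbs_mul, Int.natAbs_natCast, Int.natAbs_pow] at this
    rw [show (2 : ℤ).natAbs = 2 from rfl] at this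
    rw [← this]; ring
  have hodd : Odd c.natAbs := Int.natAbs_odd.2 hc
  have hc0 : c.natAbs ≠ 0 := fun h0 => by rw [h0] at hodd; simp at hodd
  have : Fact (Nat.Prime 2) := ⟨Nat.prime_two⟩
  rw [h', padicValNat.mul (by positivity) hc0, padicValNat.mul (by positivity) hP0,
    padicValNat.prime_pow, padicValNat.eq_zero_of_not_dvd hodd.not_two_dvd_nat, add_zero]
end

section
/- Let m ≥ 1 and 0 ≤ l ≤ m be integers. Then the 2-adic valuation of A_{l,m} is given by ν₂(A_{l,m}) = 3l − s₂(m+l) + s₂(m−l). Equivalently, stated without the division by 2^{m−l}: ν₂(l! · m! · b_{l,m}) = (m − l) + 3l − s₂(m+l) + s₂(m−l). -/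
/-- Coefficients of the expansion in powers of `1 + x`. -/
def acoef (m k : ℕ) : ℤ :=
  2 ^ k * (Nat.choose (2 * (m - k)) (m - k) : ℤ) * (Nat.choose (m + k) m : ℤ)

lemma acoef_succ (m k : ℕ) (h : k < m) :
    ((k : ℤ) + 1) * (2 * m - 2 * k - 1) * acoef m (k + 1)
      = ((m : ℤ) - k) * (m + k + 1) * acoef m k := by
  obtain ⟨n, rfl⟩ : ∃ n, m = k + n + 1 := ⟨m - k - 1, by omega⟩
  have h1 := Nat.succ_mul_centralBinom_succ n
  have h2 := Nat.add_one_mul_choose_eq (k + n + 1 + k) k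
  unfold acoef
  have e1 : k + n + 1 - (k + 1) = n := by omega
  have e2 : k + n + 1 - k = n + 1 := by omega
  rw [e1, e2]
  unfold Nat.centralBinom at h1
  rw [← Nat.choose_symm_of_eq_add (show k + n + 1 + k = (k + n + 1) + k by rfl)] at h2
  rw [← Nat.choose_symm_of_eq_add
    (show k + n + 1 + k + 1 = (k + n + 1) + (k + 1) by omega)] at h2
  rw [← add_assoc (k + n + 1) k 1]
  zify at h1 h2
  generalize ((Nat.choose (2 * (n + 1)) (n + 1) : ℕ) : ℤ) = x at *
  generalize ((Nat.choose (2 * n) n : ℕ) : ℤ) = y at *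
  generalize ((Nat.choose (k + n + 1 + k + 1) (k + n + 1) : ℕ) : ℤ) = z at *
  generalize ((Nat.choose (k + n + 1 + k) (k + n + 1) : ℕ) : ℤ) = w at *
  push_cast
  rw [pow_succ]
  linear_combination (-(2 : ℤ) ^ k * (2 * n + 1) * y * 2) * h2
    - (2 : ℤ) ^ k * (k + n + 1 + k + 1) * w * h1

lemma choose_succ_int (k l : ℕ) :
    ((l : ℤ) + 1) * (Nat.choose k (l + 1) : ℤ) = ((k : ℤ) - l) * (Nat.choose k l : ℤ) := by
  rcases le_or_gt l k with h | h
  · have := Nat.choose_succ_right_eq k l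
    zify [h] at this
    linarith
  · rw [Nat.choose_eq_zero_of_lt h, Nat.choose_eq_zero_of_lt (by omega : k < l + 1)]
    simp

lemma blm_eq (l m : ℕ) :
    (blm l m : ℤ) = ∑ k ∈ Finset.range (m + 1), acoef m k * (Nat.choose k l : ℤ) := by
  unfold blm acoef
  push_cast
  have hs : Finset.Icc l m ⊆ Finset.range (m + 1) := by
    intro x hx
    simp at hx ⊢
    omega
  rw [← Finset.sum_subset hs]
  · apply Finset.sum_congr rfl
    intro k _
    rw [Nat.mul_sub]
  · intro k hk hk'
    simp at hk hk'
    rw [Nat.choose_eq_zero_of_lt (by omega : k < l)]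
    simp

/-- Summand of the recurrence. -/
def Fterm (m l k : ℕ) : ℤ :=
  acoef m k * (((l : ℤ) + 1) * (l + 2) * (Nat.choose k (l + 2) : ℤ)
    - (2 * m + 1) * (l + 1) * (Nat.choose k (l + 1) : ℤ)
    + ((m : ℤ) + l + 1) * (m - l) * (Nat.choose k l : ℤ))

lemma Fterm_eq (m l k : ℕ) :
    Fterm m l k = acoef m k * (((l : ℤ) + 1) * (Nat.choose k (l + 1) : ℤ) * (2 * k - 2 * m - 1)
      + ((m : ℤ) - k) * (m + k + 1) * (Nat.choose k l : ℤ)) := by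
  have h1 := choose_succ_int k l
  have h2 := choose_succ_int k (l + 1)
  push_cast at h2
  unfold Fterm
  linear_combination acoef m k * (l + 1) * h2 + acoef m k * (-(k : ℤ) - l - 1) * h1

lemma sum_Fterm (m l n : ℕ) (h : n ≤ m) :
    ∑ k ∈ Finset.range n, Fterm m l k
      = - (acoef m n * (((l : ℤ) + 1) * (Nat.choose n (l + 1) : ℤ) * (2 * n - 2 * m - 1))) := by
  induction n with
  | zero => simp
  | succ n ih =>
    rw [Finset.sum_range_succ, ih (by omega), Fterm_eq]
    have h1 := acoef_succ m n (by omega)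
    have h2 := Nat.add_one_mul_choose_eq n l
    zify at h2
    push_cast
    linear_combination (-(Nat.choose n l : ℤ)) * h1
      + (acoef m (n + 1)) * (2 * n - 2 * m + 1) * (-1) * h2

lemma blm_rec (m l : ℕ) :
    ((l : ℤ) + 1) * (l + 2) * (blm (l + 2) m : ℤ) - (2 * m + 1) * (l + 1) * (blm (l + 1) m : ℤ)
      + ((m : ℤ) + l + 1) * (m - l) * (blm l m : ℤ) = 0 := by
  have h : ∑ k ∈ Finset.range (m + 1), Fterm m l k = 0 := by
    rw [Finset.sum_range_succ, sum_Fterm m l m le_rfl, Fterm_eq]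
    ring
  rw [← h, blm_eq, blm_eq, blm_eq, Finset.mul_sum, Finset.mul_sum, Finset.mul_sum,
    ← Finset.sum_sub_distrib, ← Finset.sum_add_distrib]
  apply Finset.sum_congr rfl
  intro k _
  unfold Fterm
  ring

lemma blm_key (m d : ℕ) : ∀ l, l + d = m → ∃ B B' : ℤ, Odd B ∧
    (blm l m : ℤ) * (l.factorial * m.factorial * d.factorial) = 2 ^ m * (m + l).factorial * B ∧
    (blm (l + 1) m : ℤ) * ((l + 1).factorial * m.factorial * d.factorial)
      = 2 ^ m * (m + l + 1).factorial * d * B' := by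
  induction d with
  | zero =>
    intro l hl
    obtain rfl : l = m := by omega
    refine ⟨1, 0, odd_one, ?_, ?_⟩
    · have := Nat.add_choose_mul_factorial_mul_factorial l l
      zify at this
      simp only [blm, Finset.Icc_self, Finset.sum_singleton]
      simp
      rw [← this]
      ring
    · simp [blm]
  | succ d ih =>
    intro l hl
    obtain ⟨B, B', hB, h1, h2⟩ := ih (l + 1) (by omega)
    refine ⟨(2 * m + 1) * B - d * (m + l + 2) * B', B, ?_, ?_, ?_⟩
    · have hev : Even ((d : ℤ) * (m + l + 2)) := by
        have : (m : ℤ) = l + 1 + d := by omega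
        rw [this, show (d : ℤ) * (l + 1 + d + l + 2) = d * (d + 1) + 2 * (d * (l + 1)) by ring]
        exact (Int.even_mul_succ_self _).add (even_two_mul _)
      have ho : Odd (2 * (m : ℤ) + 1) := ⟨m, rfl⟩
      exact (ho.mul hB).sub_even (hev.mul_right _)
    · have hr := blm_rec m l
      have hml : (m : ℤ) = l + 1 + d := by omega
      have hne : ((m : ℤ) + l + 1) ≠ 0 := by positivity
      apply mul_left_cancel₀ hne
      rw [show m + (l + 1) + 1 = m + l + 1 + 1 by ring, show m + (l + 1) = m + l + 1 by ring] at *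
      rw [show l + 1 + 1 = l + 2 by rfl] at h2
      have f1 := Nat.factorial_succ (m + l + 1)
      have f2 := Nat.factorial_succ (m + l)
      have f3 := Nat.factorial_succ (l + 1)
      have f4 := Nat.factorial_succ l
      have f5 := Nat.factorial_succ d
      rw [f1, f2, show l + 2 = l + 1 + 1 by rfl, f3, f4] at h2
      rw [f2, f4] at h1
      rw [f5]
      push_cast at *
      have hd : (d : ℤ) = m - l - 1 := by omega
      rw [hd] at h2 ⊢
      linear_combination (l.factorial * m.factorial * d.factorial : ℤ) * hr
        + (2 * (m : ℤ) + 1) * h1 - h2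
    · have f5 := Nat.factorial_succ d
      rw [f5]
      push_cast
      rw [show m + (l + 1) = m + l + 1 by ring] at h1
      linear_combination ((d : ℤ) + 1) * h1

lemma val_fact (n : ℕ) :
    (padicValNat 2 n.factorial : ℤ) = n - ((Nat.digits 2 n).sum : ℤ) := by
  have h := sub_one_mul_padicValNat_factorial (p := 2) n
  have h' := Nat.digit_sum_le 2 n
  omega

/-- ν₂(l!·m!·b_{l,m}) = (m − l) + 3l − s₂(m+l) + s₂(m−l), i.e.
ν₂(A_{l,m}) = 3l − s₂(m+l) + s₂(m−l). -/
theorem nu2_A_digits (m l : ℕ) (hm : 1 ≤ m) (hl : l ≤ m) :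
    (padicValNat 2 (Nat.factorial l * Nat.factorial m * blm l m) : ℤ) =
      ((m : ℤ) - l) + 3 * l - ((Nat.digits 2 (m + l)).sum : ℤ)
        + ((Nat.digits 2 (m - l)).sum : ℤ) := by
  obtain ⟨B, B', hB, h1, -⟩ := blm_key m (m - l) l (by omega)
  have hodd : Odd B.natAbs := Int.natAbs_odd.mpr hB
  have h : (l.factorial * m.factorial * blm l m) * (m - l).factorial
      = 2 ^ m * (m + l).factorial * B.natAbs := by
    have := congrArg Int.natAbs h1
    simp only [Int.natAbs_mul, Int.natAbs_natCast, Int.natAbs_pow] at this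
    rw [show Int.natAbs 2 = 2 by rfl] at this
    rw [← this]
    ring
  have hB0 : B.natAbs ≠ 0 := by
    intro h0
    rw [h0] at hodd
    simp at hodd
  have hR : 2 ^ m * (m + l).factorial * B.natAbs ≠ 0 :=
    mul_ne_zero (mul_ne_zero (by positivity) (Nat.factorial_ne_zero _)) hB0
  have hL : l.factorial * m.factorial * blm l m ≠ 0 := by
    intro h0
    rw [h0, zero_mul] at h
    exact hR h.symm
  have hv := congrArg (padicValNat 2) h
  rw [padicValNat.mul hL (Nat.factorial_ne_zero _),
    padicValNat.mul (mul_ne_zero (by positivity) (Nat.factorial_ne_zero _)) hB0,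
    padicValNat.mul (by positivity) (Nat.factorial_ne_zero _), padicValNat.prime_pow,
    padicValNat.eq_zero_of_not_dvd (n := B.natAbs)
      (by rw [← even_iff_two_dvd]; exact Nat.not_even_iff_odd.mpr hodd)] at hv
  have v1 := val_fact (m - l)
  have v2 := val_fact (m + l)
  omega
end

section
/- Let n ≥ 1 and k be integers with 1 ≤ k ≤ 2^n. Then ν₂(S(2^n + 1, k + 1)) = s₂(k) − 1. -/
/-- Stirling numbers of the second kind, via the recurrence
`S(n+1,k+1) = S(n,k) + (k+1)·S(n,k+1)`. -/
def stirling2 : ℕ → ℕ → ℕ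
  | 0, 0 => 1
  | 0, _ + 1 => 0
  | _ + 1, 0 => 0
  | n + 1, k + 1 => stirling2 n k + (k + 1) * stirling2 n (k + 1)

/-- Iterated forward differences. -/
def DD (f : ℕ → ℤ) : ℕ → ℕ → ℤ
  | 0, a => f a
  | k + 1, a => DD f k (a + 1) - DD f k a

lemma DD_mul (f g : ℕ → ℤ) (k a : ℕ) :
    DD (fun x => f x * g x) k a =
      ∑ p ∈ Finset.HasAntidiagonal.antidiagonal k, (k.choose p.1 : ℤ) * (DD f p.1 a * DD g p.2 (a + p.1)) := by
  induction k generalizing a with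
  | zero => simp [DD]
  | succ k ih =>
    have h := Finset.sum_antidiagonal_choose_succ_nsmul
      (fun i j => DD f i a * DD g j (a + i)) k
    simp only [nsmul_eq_mul] at h
    rw [h, DD, ih, ih, ← Finset.sum_sub_distrib, ← Finset.sum_add_distrib]
    apply Finset.sum_congr rfl
    rintro ⟨i, j⟩ hp
    rw [Finset.HasAntidiagonal.mem_antidiagonal] at hp
    simp only at hp
    have hc : k.choose j = k.choose i := by
      rw [← hp, Nat.choose_symm_add]
    simp only [DD, hc]
    rw [show a + (i + 1) = a + 1 + i by ring, show a + i + 1 = a + 1 + i by ring]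
    ring

lemma DD_X_mul (f : ℕ → ℤ) (k a : ℕ) :
    DD (fun x => f x * x) (k + 1) a =
      ((a : ℤ) + k + 1) * DD f (k + 1) a + (k + 1) * DD f k a := by
  induction k generalizing a with
  | zero => simp [DD]; ring
  | succ k ih =>
    rw [DD, ih, ih]
    simp only [DD]
    push_cast
    ring

lemma DD_pow (N k : ℕ) :
    DD (fun x => (x : ℤ) ^ N) k 0 = (k.factorial : ℤ) * stirling2 N k := by
  induction N generalizing k with
  | zero =>
    have h : ∀ k a, DD (fun x => (x : ℤ) ^ 0) (k + 1) a = 0 := by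
      intro k
      induction k with
      | zero => intro a; simp [DD]
      | succ k ih => intro a; rw [DD, ih, ih]; rfl
    cases k with
    | zero => simp [DD, stirling2]
    | succ k => rw [h]; simp [stirling2]
  | succ N ih =>
    cases k with
    | zero => simp [DD, stirling2]
    | succ k =>
      have : (fun x : ℕ => (x : ℤ) ^ (N + 1)) = fun x : ℕ => (x : ℤ) ^ N * x := by
        funext x; ring
      rw [this, DD_X_mul, ih, ih, stirling2, Nat.factorial_succ]
      push_cast
      ring

/-- Normalized differences at shifted points. -/
def UU (u : ℕ → ℤ) : ℕ → ℕ → ℤ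
  | k, 0 => u k
  | k, a + 1 => UU u k a + 2 * UU u (k + 1) a

lemma UU_spec (f : ℕ → ℤ) (u : ℕ → ℤ) (h : ∀ k, 2 * DD f k 0 = 2 ^ k * u k) (a k : ℕ) :
    2 * DD f k a = 2 ^ k * UU u k a := by
  induction a generalizing k with
  | zero => exact h k
  | succ a ih =>
    have h1 := ih k
    have h2 := ih (k + 1)
    rw [DD] at h2
    rw [UU]
    rw [pow_succ] at h2
    linarith

lemma UU_mod (u : ℕ → ℤ) (a k : ℕ) : ∃ c, UU u k a = u k + 2 * a * u (k + 1) + 4 * c := by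
  induction a generalizing k with
  | zero => exact ⟨0, by simp [UU]⟩
  | succ a ih =>
    obtain ⟨c, hc⟩ := ih k
    obtain ⟨d, hd⟩ := ih (k + 1)
    refine ⟨c + a * u (k + 1 + 1) + 2 * d, ?_⟩
    rw [UU, hc, hd]; push_cast; ring

lemma symm_sum (F : ℕ → ℕ → ℤ) (k : ℕ) (hs : ∀ i j, i + j = k → F i j = F j i)
    (h2 : ∀ i j, i + j = k → (2 : ℤ) ∣ F i j) (h4 : ∀ m, m + m = k → (4 : ℤ) ∣ F m m) :
    (4 : ℤ) ∣ ∑ p ∈ Finset.HasAntidiagonal.antidiagonal k, F p.1 p.2 := by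
  have e : ∑ p ∈ Finset.HasAntidiagonal.antidiagonal k, F p.1 p.2 =
      2 * (∑ p ∈ Finset.HasAntidiagonal.antidiagonal k, if p.1 < p.2 then F p.1 p.2 else 0) +
      ∑ p ∈ Finset.HasAntidiagonal.antidiagonal k, if p.1 = p.2 then F p.1 p.2 else 0 := by
    have e1 : (∑ p ∈ Finset.HasAntidiagonal.antidiagonal k, if p.1 < p.2 then F p.1 p.2 else 0) =
        ∑ p ∈ Finset.HasAntidiagonal.antidiagonal k, if p.2 < p.1 then F p.1 p.2 else 0 := by
      rw [← Finset.Nat.sum_antidiagonal_swap]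
      apply Finset.sum_congr rfl
      rintro ⟨i, j⟩ hp
      rw [Finset.HasAntidiagonal.mem_antidiagonal] at hp
      simp only [Prod.swap]
      rw [hs i j hp]
    rw [two_mul]
    nth_rewrite 2 [e1]
    rw [← Finset.sum_add_distrib, ← Finset.sum_add_distrib]
    apply Finset.sum_congr rfl
    rintro ⟨i, j⟩ -
    simp only
    rcases lt_trichotomy i j with h | h | h
    · simp [h, h.ne, h.not_gt]
    · simp [h]
    · simp [h, h.ne', h.not_gt]
  rw [e]
  apply dvd_add
  · have : (2 : ℤ) ∣ ∑ p ∈ Finset.HasAntidiagonal.antidiagonal k, if p.1 < p.2 then F p.1 p.2 else 0 := by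
      apply Finset.dvd_sum
      rintro ⟨i, j⟩ hp
      rw [Finset.HasAntidiagonal.mem_antidiagonal] at hp
      split_ifs
      · exact h2 i j hp
      · exact dvd_zero _
    exact mul_dvd_mul_left 2 this
  · apply Finset.dvd_sum
    rintro ⟨i, j⟩ hp
    rw [Finset.HasAntidiagonal.mem_antidiagonal] at hp
    simp only at hp ⊢
    split_ifs with h
    · subst h; exact h4 i hp
    · exact dvd_zero _

lemma choose_odd (n m : ℕ) (h : m < 2 ^ n) : (2 ^ n + m).choose m % 2 = 1 := by
  induction n generalizing m with
  | zero => 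
    have : m = 0 := by simpa using h
    subst this; simp
  | succ n ih =>
    haveI : Fact (Nat.Prime 2) := ⟨Nat.prime_two⟩
    have hl := Choose.choose_modEq_choose_mod_mul_choose_div_nat (p := 2)
      (n := 2 ^ (n + 1) + m) (k := m)
    rw [pow_succ] at h hl ⊢
    rw [show (2 ^ n * 2 + m) % 2 = m % 2 by omega,
      show (2 ^ n * 2 + m) / 2 = 2 ^ n + m / 2 by omega, Nat.choose_self, one_mul] at hl
    rw [hl, ih _ (by omega)]

lemma sum_choose_mod (k m : ℕ) :
    ∃ c : ℤ, ∑ i ∈ Finset.range (m + 1), ((k + 1).choose i : ℤ) = k.choose m + 2 * c := by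
  induction m with
  | zero => exact ⟨0, by simp⟩
  | succ m ih =>
    obtain ⟨c, hc⟩ := ih
    refine ⟨c + k.choose m, ?_⟩
    rw [Finset.sum_range_succ, hc, Nat.choose_succ_succ]
    push_cast; ring

/-- Indicator of `1 ≤ i ≤ N`. -/
def chi (N i : ℕ) : ℤ := if 1 ≤ i ∧ i ≤ N then 1 else 0

lemma chi_sum (n k : ℕ) (hk : k ≠ 1) :
    (4 : ℤ) ∣ (∑ p ∈ Finset.HasAntidiagonal.antidiagonal k,
      (k.choose p.1 : ℤ) * (chi (2 ^ n) p.1 * chi (2 ^ n) p.2)) - 2 * chi (2 * 2 ^ n) k := by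
  set N := 2 ^ n with hN
  have hN1 : 1 ≤ N := Nat.one_le_two_pow
  by_cases h : 2 ≤ k ∧ k ≤ 2 * N
  · obtain ⟨h1, h2⟩ := h
    obtain ⟨m, hm⟩ : ∃ m, m + 1 = max (k - N) 1 := ⟨max (k - N) 1 - 1, by omega⟩
    obtain ⟨k', rfl⟩ : ∃ k', k = k' + 1 := ⟨k - 1, by omega⟩
    have hodd : k'.choose m % 2 = 1 := by
      by_cases hkN : k' + 1 ≤ N
      · have : m = 0 := by omega
        subst this; simp
      · have : k' = N + m := by omega
        rw [this]; exact choose_odd n m (by omega)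
    obtain ⟨c, hc⟩ := sum_choose_mod k' m
    have e1 : ∑ p ∈ Finset.HasAntidiagonal.antidiagonal (k' + 1), (((k' + 1).choose p.1 : ℕ) : ℤ) =
        2 ^ (k' + 1) := by
      rw [Finset.Nat.sum_antidiagonal_eq_sum_range_succ_mk]
      have := Nat.sum_range_choose (k' + 1)
      exact_mod_cast this
    have e2 : ∑ p ∈ Finset.HasAntidiagonal.antidiagonal (k' + 1),
        (if p.1 < m + 1 then ((k' + 1).choose p.1 : ℤ) else 0) = k'.choose m + 2 * c := by
      rw [← hc, Finset.Nat.sum_antidiagonal_eq_sum_range_succ_mk, ← Finset.sum_filter]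
      apply Finset.sum_congr _ (fun _ _ => rfl)
      ext i
      simp only [Finset.mem_filter, Finset.mem_range]
      omega
    have e3 : ∑ p ∈ Finset.HasAntidiagonal.antidiagonal (k' + 1),
        (if p.2 < m + 1 then ((k' + 1).choose p.1 : ℤ) else 0) = k'.choose m + 2 * c := by
      rw [← e2, ← Finset.Nat.sum_antidiagonal_swap]
      apply Finset.sum_congr rfl
      rintro ⟨i, j⟩ hp
      rw [Finset.HasAntidiagonal.mem_antidiagonal] at hp
      simp only at hp
      simp only [Prod.swap]
      rw [← hp, Nat.choose_symm_add]
    have e4 : ∑ p ∈ Finset.HasAntidiagonal.antidiagonal (k' + 1),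
      ((k' + 1).choose p.1 : ℤ) * (chi N p.1 * chi N p.2) =
        2 ^ (k' + 1) - (k'.choose m + 2 * c) - (k'.choose m + 2 * c) := by
      nth_rewrite 1 [← e2]
      rw [← e3, ← e1, ← Finset.sum_sub_distrib, ← Finset.sum_sub_distrib]
      apply Finset.sum_congr rfl
      rintro ⟨i, j⟩ hp
      rw [Finset.HasAntidiagonal.mem_antidiagonal] at hp
      simp only at hp
      simp only [chi]
      by_cases hi : i < m + 1
      · have hj : ¬ j < m + 1 := by omega
        have : ¬ ((1 ≤ i ∧ i ≤ N) ∧ (1 ≤ j ∧ j ≤ N)) := by omega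
        rw [if_pos hi, if_neg hj]
        by_cases ha : (1 ≤ i ∧ i ≤ N)
        · have hb : ¬ (1 ≤ j ∧ j ≤ N) := fun hb => this ⟨ha, hb⟩
          rw [if_neg hb]; ring
        · rw [if_neg ha]; ring
      · by_cases hj : j < m + 1
        · have : ¬ ((1 ≤ i ∧ i ≤ N) ∧ (1 ≤ j ∧ j ≤ N)) := by omega
          rw [if_neg hi, if_pos hj]
          by_cases ha : (1 ≤ i ∧ i ≤ N)
          · have hb : ¬ (1 ≤ j ∧ j ≤ N) := fun hb => this ⟨ha, hb⟩
            rw [if_neg hb]; ring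
          · rw [if_neg ha]; ring
        · rw [if_neg hi, if_neg hj, if_pos (by omega), if_pos (by omega)]; ring
    rw [e4, chi, if_pos (by omega)]
    obtain ⟨q, rfl⟩ : ∃ q, k' = q + 1 := ⟨k' - 1, by omega⟩
    rw [show (2 : ℤ) ^ (q + 1 + 1) = 4 * 2 ^ q by ring]
    generalize (2 : ℤ) ^ q = z
    omega
  · have : ∀ p ∈ Finset.HasAntidiagonal.antidiagonal k, (k.choose p.1 : ℤ) * (chi N p.1 * chi N p.2) = 0 := by
      rintro ⟨i, j⟩ hp
      rw [Finset.HasAntidiagonal.mem_antidiagonal] at hp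
      simp only at hp
      simp only [chi]
      by_cases ha : (1 ≤ i ∧ i ≤ N)
      · have hb : ¬ (1 ≤ j ∧ j ≤ N) := by omega
        rw [if_neg hb]; ring
      · rw [if_neg ha]; ring
    rw [Finset.sum_eq_zero this, chi, if_neg (by omega)]
    simp

lemma main_step (n : ℕ) (u : ℕ → ℤ) (hu : ∀ k, (2 : ℤ) ∣ u k - chi (2 ^ n) k) (k : ℕ) :
    (4 : ℤ) ∣ (∑ p ∈ Finset.HasAntidiagonal.antidiagonal k, (k.choose p.1 : ℤ) * (u p.1 * UU u p.2 p.1))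
      - 2 * chi (2 * 2 ^ n) k := by
  have hN1 : 1 ≤ 2 ^ n := Nat.one_le_two_pow
  by_cases hk : k = 1
  · subst hk
    have h0 := hu 0
    have h1 := hu 1
    simp only [chi] at h0 h1
    rw [if_pos (by omega)] at h1
    rw [if_neg (by omega)] at h0
    obtain ⟨c, hc⟩ := h0
    obtain ⟨d, hd⟩ := h1
    have hc' : u 0 = 2 * c := by linarith
    have hd' : u 1 = 2 * d + 1 := by linarith
    rw [chi, if_pos (by omega)]
    simp [Finset.Nat.antidiagonal_succ, UU, hc', hd']
    exact ⟨c * (2 * d + 1) + 2 * d ^ 2 + 2 * d, by ring⟩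
  choose c hc using fun a k => UU_mod u a k
  have s1 : (4 : ℤ) ∣ ∑ p ∈ Finset.HasAntidiagonal.antidiagonal k, (k.choose p.1 : ℤ) *
      (u p.1 * u p.2 - chi (2 ^ n) p.1 * chi (2 ^ n) p.2) := by
    apply symm_sum (fun i j => (k.choose i : ℤ) * (u i * u j - chi (2 ^ n) i * chi (2 ^ n) j))
    · intro i j h
      rw [← h, Nat.choose_symm_add]; ring
    · intro i j h
      apply Dvd.dvd.mul_left
      obtain ⟨a, ha⟩ := hu i
      obtain ⟨b, hb⟩ := hu j
      exact ⟨a * u j + chi (2 ^ n) i * b, by linear_combination ha * u j + chi (2 ^ n) i * hb⟩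
    · intro m h
      apply Dvd.dvd.mul_left
      obtain ⟨a, ha⟩ := hu m
      exact ⟨a * (a + chi (2 ^ n) m), by
        have : u m = 2 * a + chi (2 ^ n) m := by linarith
        rw [this]; ring⟩
  have s2 : (4 : ℤ) ∣ ∑ p ∈ Finset.HasAntidiagonal.antidiagonal k,
      2 * ((p.1 : ℤ) * k.choose p.1 * (u p.1 * u (p.2 + 1))) := by
    rcases k with _ | k
    · simp
    · rw [Finset.Nat.sum_antidiagonal_succ]
      simp only [Nat.cast_zero, zero_mul, mul_zero, zero_add]
      have : (4 : ℤ) ∣ ∑ p ∈ Finset.HasAntidiagonal.antidiagonal k,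
          2 * ((k.choose p.1 : ℤ) * (u (p.1 + 1) * u (p.2 + 1))) := by
        apply symm_sum (fun i j => 2 * ((k.choose i : ℤ) * (u (i + 1) * u (j + 1))))
        · intro i j h
          rw [← h, Nat.choose_symm_add]; ring
        · intro i j h
          exact dvd_mul_right _ _
        · intro m h
          have hm := Nat.two_dvd_centralBinom_of_one_le (n := m) (by omega)
          rw [Nat.centralBinom, two_mul, h] at hm
          obtain ⟨t, ht⟩ := hm
          rw [ht]
          exact ⟨t * (u (m + 1) * u (m + 1)), by push_cast; ring⟩
      obtain ⟨t, ht⟩ := this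
      refine ⟨(k + 1) * t, ?_⟩
      rw [show (4 : ℤ) * ((k + 1) * t) = (k + 1) * (4 * t) by ring, ← ht, Finset.mul_sum]
      apply Finset.sum_congr rfl
      rintro ⟨i, j⟩ -
      have := Nat.add_one_mul_choose_eq k i
      have h' : ((k : ℤ) + 1) * k.choose i = (k + 1).choose (i + 1) * (i + 1) := by
        exact_mod_cast this
      simp only
      push_cast
      linear_combination (-2 * (u (i + 1) * u (j + 1))) * h'
  have s3 := chi_sum n k hk
  have s4 : (4 : ℤ) ∣ ∑ p ∈ Finset.HasAntidiagonal.antidiagonal k,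
      4 * ((k.choose p.1 : ℤ) * u p.1 * c p.1 p.2) :=
    Finset.dvd_sum (fun _ _ => dvd_mul_right _ _)
  have := dvd_add (dvd_add (dvd_add s1 s2) s3) s4
  refine (congrArg (fun z : ℤ => (4 : ℤ) ∣ z) ?_).mpr this
  rw [add_sub_assoc', ← Finset.sum_add_distrib, ← Finset.sum_add_distrib, sub_add_eq_add_sub,
    ← Finset.sum_add_distrib]
  congr 1
  apply Finset.sum_congr rfl
  rintro ⟨i, j⟩ -
  simp only
  rw [hc]
  ring

lemma main_ind (n : ℕ) : ∃ u : ℕ → ℤ,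
    (∀ k, 2 * DD (fun x => (x : ℤ) ^ (2 ^ n)) k 0 = 2 ^ k * u k) ∧
    ∀ k, (2 : ℤ) ∣ u k - chi (2 ^ n) k := by
  induction n with
  | zero =>
    refine ⟨chi 1, ?_, by simp⟩
    have h : ∀ k a, DD (fun x => (x : ℤ) ^ (2 ^ 0)) (k + 2) a = 0 := by
      intro k
      induction k with
      | zero => intro a; simp [DD]
      | succ k ih => intro a; rw [DD, ih, ih]; rfl
    intro k
    rcases k with _ | _ | k
    · simp [DD, chi]
    · simp [DD, chi]
    · rw [h]; simp [chi]
  | succ n ih =>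
    obtain ⟨u, h1, h2⟩ := ih
    have hs := main_step n u h2
    choose c hc using hs
    refine ⟨fun k => chi (2 * 2 ^ n) k + 2 * c k, ?_, ?_⟩
    · intro k
      have e : (fun x : ℕ => (x : ℤ) ^ (2 ^ (n + 1))) =
          fun x : ℕ => (x : ℤ) ^ (2 ^ n) * (x : ℤ) ^ (2 ^ n) := by
        funext x; rw [← pow_add]; congr 1; ring
      have e2 : 4 * DD (fun x => (x : ℤ) ^ (2 ^ (n + 1))) k 0 = 2 ^ k *
          ∑ p ∈ Finset.HasAntidiagonal.antidiagonal k, (k.choose p.1 : ℤ) * (u p.1 * UU u p.2 p.1) := by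
        rw [e, DD_mul, Finset.mul_sum, Finset.mul_sum]
        apply Finset.sum_congr rfl
        rintro ⟨i, j⟩ hp
        rw [Finset.HasAntidiagonal.mem_antidiagonal] at hp
        simp only at hp ⊢
        have a1 := h1 i
        have a2 := UU_spec _ u h1 i j
        rw [zero_add, ← hp, pow_add]
        linear_combination ((i + j).choose i : ℤ) *
          (a1 * (2 * DD (fun x => (x : ℤ) ^ (2 ^ n)) j i) + 2 ^ i * u i * a2)
      have e3 := hc k
      rw [sub_eq_iff_eq_add] at e3
      rw [e3] at e2
      linarith
    · intro k
      rw [pow_succ, mul_comm (2 ^ n) 2]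
      exact ⟨c k, by ring⟩

lemma main_val (n k : ℕ) (hk : 1 ≤ k) (hk' : k ≤ 2 ^ n) :
    ∃ w : ℕ, w % 2 = 1 ∧ k.factorial * stirling2 (2 ^ n + 1) (k + 1) = 2 ^ (k - 1) * w := by
  obtain ⟨u, h1, h2⟩ := main_ind n
  have a1 := h1 k
  have a2 := h1 (k + 1)
  rw [DD_pow] at a1 a2
  have b := h2 k
  rw [chi, if_pos ⟨hk, hk'⟩] at b
  obtain ⟨m, rfl⟩ : ∃ m, k = m + 1 := ⟨k - 1, by omega⟩
  have key : (((m + 1).factorial * stirling2 (2 ^ n + 1) (m + 1 + 1) : ℕ) : ℤ) =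
      2 ^ m * (u (m + 1) + 2 * u (m + 1 + 1)) := by
    rw [stirling2]
    rw [Nat.factorial_succ (m + 1)] at a2
    push_cast at a1 a2 ⊢
    rw [pow_succ] at a1
    rw [pow_succ, pow_succ] at a2
    linarith
  have hpos : 0 ≤ u (m + 1) + 2 * u (m + 1 + 1) := by
    have h0 : (0 : ℤ) ≤ 2 ^ m * (u (m + 1) + 2 * u (m + 1 + 1)) := by
      rw [← key]; positivity
    exact nonneg_of_mul_nonneg_right h0 (by positivity)
  refine ⟨(u (m + 1) + 2 * u (m + 1 + 1)).toNat, by omega, ?_⟩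
  zify
  rw [Int.toNat_of_nonneg hpos]
  push_cast at key
  simpa using key

/-- ν₂(S(2ⁿ+1, k+1)) = s₂(k) − 1 for 1 ≤ k ≤ 2ⁿ. -/
theorem nu2_stirling_pow_two_succ (n k : ℕ) (hn : 1 ≤ n) (hk : 1 ≤ k) (hk' : k ≤ 2 ^ n) :
    padicValNat 2 (stirling2 (2 ^ n + 1) (k + 1)) = (Nat.digits 2 k).sum - 1 := by
  haveI : Fact (Nat.Prime 2) := ⟨Nat.prime_two⟩
  obtain ⟨w, hw, h⟩ := main_val n k hk hk'
  have hw0 : w ≠ 0 := by omega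
  have hS : stirling2 (2 ^ n + 1) (k + 1) ≠ 0 := by
    intro h0
    rw [h0, mul_zero] at h
    have : 2 ^ (k - 1) * w ≠ 0 := mul_ne_zero (by positivity) hw0
    exact this h.symm
  have hv := congrArg (padicValNat 2) h
  rw [padicValNat.mul (Nat.factorial_ne_zero k) hS, padicValNat.mul (by positivity) hw0,
    padicValNat.prime_pow, padicValNat.eq_zero_of_not_dvd (n := w) (by omega)] at hv
  have hL := sub_one_mul_padicValNat_factorial (p := 2) k
  have hle := Nat.digit_sum_le 2 k
  omega
end

section
/- Let m ≥ 1 and N be integers with N ≥ m + 2. Then the integer S(N + 2^m, 5) − 5^{2^m} · S(N, 5) has 2-adic valuation exactly m − 1, that is, ν₂( S(N + 2^m, 5) − 5^{2^m} · S(N, 5) ) = m − 1. -/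
lemma st_one (n : ℕ) : (stirling2 (n + 1) 1 : ℤ) = 1 := by
  induction n with
  | zero => simp [stirling2]
  | succ n ih => rw [stirling2]; push_cast; rw [ih]; simp [stirling2]

lemma st_two (n : ℕ) : 2 * (stirling2 (n + 1) 2 : ℤ) = 2 ^ (n + 1) - 2 := by
  induction n with
  | zero => simp [stirling2]
  | succ n ih =>
    rw [stirling2]; push_cast; rw [st_one, pow_succ]; linarith

lemma st_three (n : ℕ) :
    6 * (stirling2 (n + 1) 3 : ℤ) = 3 ^ (n + 1) - 3 * 2 ^ (n + 1) + 3 := by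
  induction n with
  | zero => simp [stirling2]
  | succ n ih =>
    have h := st_two n
    rw [stirling2]; push_cast; rw [pow_succ 3 (n + 1), pow_succ 2 (n + 1)]; linarith

lemma st_four (n : ℕ) :
    24 * (stirling2 (n + 1) 4 : ℤ)
      = 4 ^ (n + 1) - 4 * 3 ^ (n + 1) + 6 * 2 ^ (n + 1) - 4 := by
  induction n with
  | zero => simp [stirling2]
  | succ n ih =>
    have h := st_three n
    rw [stirling2]; push_cast
    rw [pow_succ 4 (n + 1), pow_succ 3 (n + 1), pow_succ 2 (n + 1)]; linarith

lemma st_five (n : ℕ) :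
    120 * (stirling2 (n + 1) 5 : ℤ)
      = 5 ^ (n + 1) - 5 * 4 ^ (n + 1) + 10 * 3 ^ (n + 1) - 10 * 2 ^ (n + 1) + 5 := by
  induction n with
  | zero => simp [stirling2]
  | succ n ih =>
    have h := st_four n
    rw [stirling2]; push_cast
    rw [pow_succ 5 (n + 1), pow_succ 4 (n + 1), pow_succ 3 (n + 1), pow_succ 2 (n + 1)]
    linarith

lemma five_pow (k : ℕ) : ∃ a : ℤ, (5 : ℤ) ^ (2 ^ (k + 1)) = 1 + 8 * 2 ^ k * (2 * a + 1) := by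
  induction k with
  | zero => exact ⟨1, by norm_num⟩
  | succ k ih =>
    obtain ⟨a, ha⟩ := ih
    refine ⟨a + 2 * 2 ^ k * (2 * a + 1) ^ 2, ?_⟩
    rw [pow_succ 2 (k + 1), pow_mul, ha]; ring

lemma three_pow (k : ℕ) : ∃ a : ℤ, (3 : ℤ) ^ (2 ^ (k + 1)) = 1 + 8 * 2 ^ k * a := by
  induction k with
  | zero => exact ⟨1, by norm_num⟩
  | succ k ih =>
    obtain ⟨a, ha⟩ := ih
    refine ⟨a + 4 * 2 ^ k * a ^ 2, ?_⟩
    rw [pow_succ 2 (k + 1), pow_mul, ha]; ring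

/-- For m ≥ 1 and N ≥ m + 2, ν₂(S(N + 2^m, 5) − 5^{2^m}·S(N, 5)) = m − 1. -/
theorem nu2_stirling_shift (m N : ℕ) (hm : 1 ≤ m) (hN : m + 2 ≤ N) :
    padicValInt 2 ((stirling2 (N + 2 ^ m) 5 : ℤ) - 5 ^ (2 ^ m) * (stirling2 N 5 : ℤ)) =
      m - 1 := by
  obtain ⟨k, rfl⟩ : ∃ k, m = k + 1 := ⟨m - 1, by omega⟩
  obtain ⟨j, rfl⟩ : ∃ j, N = k + 2 + j + 1 := ⟨N - (k + 3), by omega⟩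
  obtain ⟨a, ha⟩ := five_pow k
  obtain ⟨b, hb⟩ := three_pow k
  have h1 := st_five (k + 2 + j)
  have h2 := st_five (k + 2 + j + 2 ^ (k + 1))
  rw [show k + 2 + j + 2 ^ (k + 1) + 1 = k + 2 + j + 1 + 2 ^ (k + 1) by ring] at h2
  rw [pow_add 5 (k + 2 + j + 1), pow_add 4 (k + 2 + j + 1), pow_add 3 (k + 2 + j + 1),
    pow_add 2 (k + 2 + j + 1)] at h2
  have e2 : (2 : ℤ) ^ (k + 2 + j + 1) = 8 * 2 ^ k * 2 ^ j := by ring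
  have e4 : (4 : ℤ) ^ (k + 2 + j + 1) = 8 * 2 ^ k * (2 * (4 * 2 ^ k * 4 ^ j)) := by
    have : (4 : ℤ) ^ k = 2 ^ k * 2 ^ k := by rw [← mul_pow]; norm_num
    rw [show k + 2 + j + 1 = k + (j + 3) by ring, pow_add, this]; ring
  rw [e2, e4] at h1 h2
  rw [hb] at h2
  rw [ha] at h2 ⊢
  generalize (stirling2 (k + 2 + j + 1 + 2 ^ (k + 1)) 5 : ℤ) = X at *
  generalize (stirling2 (k + 2 + j + 1) 5 : ℤ) = Y at *
  generalize (4 : ℤ) ^ (2 ^ (k + 1)) = P4 at *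
  generalize (2 : ℤ) ^ (2 ^ (k + 1)) = P2 at *
  generalize (3 : ℤ) ^ (k + 2 + j + 1) = T at *
  generalize (5 : ℤ) ^ (k + 2 + j + 1) = F at *
  have hk : (8 * 2 ^ k : ℤ) ≠ 0 := by positivity
  obtain ⟨D, hD⟩ : ∃ D, D = X - (1 + 8 * 2 ^ k * (2 * a + 1)) * Y := ⟨_, rfl⟩
  rw [← hD]
  obtain ⟨c, hc⟩ : ∃ c : ℤ, 3 * D = 2 ^ k * (2 * c + 1) := by
    refine ⟨4 * 2 ^ k * 4 ^ j * ((1 + 8 * 2 ^ k * (2 * a + 1)) - P4)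
      - T * ((2 * a + 1) - b)
      + 2 ^ j * ((1 + 8 * 2 ^ k * (2 * a + 1)) - P2) - a - 1, ?_⟩
    have : (40 : ℤ) ≠ 0 := by norm_num
    apply mul_left_cancel₀ this
    rw [hD]
    linear_combination h2 - (1 + 8 * 2 ^ k * (2 * a + 1)) * h1
  have hdvd : (2 ^ k : ℤ) ∣ D := by
    have hcop : IsCoprime (2 ^ k : ℤ) 3 := IsCoprime.pow_left ⟨-1, 1, by norm_num⟩
    exact hcop.dvd_of_dvd_mul_left ⟨_, hc⟩
  obtain ⟨d, rfl⟩ := hdvd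
  have hd : 3 * d = 2 * c + 1 := by
    have : (2 ^ k : ℤ) ≠ 0 := by positivity
    apply mul_left_cancel₀ this
    linarith
  have hd0 : d ≠ 0 := by omega
  have hdn : ¬ ((2 : ℕ) : ℤ) ∣ d := by push_cast; omega
  rw [padicValInt.mul (by positivity) hd0, padicValInt.eq_zero_of_not_dvd hdn]
  have : padicValInt 2 (2 ^ k : ℤ) = k := by
    have := padicValNat.prime_pow (p := 2) k
    simpa [padicValInt, Int.natAbs_pow] using this
  rw [this]; simp
end

section
/- For every integer n ≥ 3, the 2-adic valuation of the Stirling number S(n,3) equals 0 if n is odd, and equals 1 if n is even. -/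
theorem stirling2_three_mod (n : ℕ) :
    stirling2 (n + 3) 1 = 1 ∧ stirling2 (n + 3) 2 % 4 = 3 ∧
    stirling2 (n + 3) 3 % 4 = 1 + n % 2 := by
  induction n with
  | zero => simp [stirling2]
  | succ n ih =>
    obtain ⟨h1, h2, h3⟩ := ih
    have e1 : stirling2 (n + 1 + 3) 1 = stirling2 (n + 3) 0 + (0 + 1) * stirling2 (n + 3) 1 := rfl
    have e0 : stirling2 (n + 3) 0 = 0 := rfl
    have e2 : stirling2 (n + 1 + 3) 2 = stirling2 (n + 3) 1 + (1 + 1) * stirling2 (n + 3) 2 := rfl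
    have e3 : stirling2 (n + 1 + 3) 3 = stirling2 (n + 3) 2 + (2 + 1) * stirling2 (n + 3) 3 := rfl
    rcases Nat.mod_two_eq_zero_or_one n with hp | hp <;> rw [hp] at h3 <;>
      refine ⟨by omega, by omega, by omega⟩

/-- For n ≥ 3, ν₂(S(n,3)) = 0 if n is odd and = 1 if n is even. -/
theorem nu2_stirling_three (n : ℕ) (hn : 3 ≤ n) :
    (Odd n → padicValNat 2 (stirling2 n 3) = 0) ∧
    (Even n → padicValNat 2 (stirling2 n 3) = 1) := by
  obtain ⟨m, rfl⟩ : ∃ m, n = m + 3 := ⟨n - 3, by omega⟩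
  obtain ⟨-, -, h⟩ := stirling2_three_mod m
  constructor
  · intro ho
    rw [Nat.odd_iff] at ho
    exact padicValNat.eq_zero_of_not_dvd (by omega)
  · intro he
    rw [Nat.even_iff] at he
    obtain ⟨k, hk⟩ : ∃ k, stirling2 (m + 3) 3 = 2 * k :=
      ⟨stirling2 (m + 3) 3 / 2, by omega⟩
    rw [hk, padicValNat.mul (by norm_num) (by omega),
      padicValNat.eq_zero_of_not_dvd (n := k) (by omega), padicValNat.self (by norm_num)]
end

section
/- For every integer n ≥ 4, the 2-adic valuation of the Stirling number S(n,4) equals 1 if n is odd, and equals 0 if n is even. -/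
theorem stirling2_inv (m : ℕ) :
    stirling2 (2 * m + 4) 0 = 0 ∧ stirling2 (2 * m + 4) 1 = 1 ∧
    stirling2 (2 * m + 4) 2 % 4 = 3 ∧ stirling2 (2 * m + 4) 3 % 4 = 2 ∧
    stirling2 (2 * m + 4) 4 % 2 = 1 ∧ stirling2 (2 * m + 5) 4 % 4 = 2 := by
  have key : ∀ n k, stirling2 (n + 1) (k + 1) =
      stirling2 n k + (k + 1) * stirling2 n (k + 1) := fun n k => by
    rw [stirling2]
  have key0 : ∀ n, stirling2 (n + 1) 0 = 0 := fun n => by rw [stirling2]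
  induction m with
  | zero => simp [stirling2]
  | succ m ih =>
    obtain ⟨h0, h1, h2, h3, h4, h5⟩ := ih
    have e1 := key (2 * m + 4) 0
    have e2 := key (2 * m + 4) 1
    have e3 := key (2 * m + 4) 2
    have f0 := key0 (2 * m + 4)
    have f1 := key (2 * m + 5) 0
    have f2 := key (2 * m + 5) 1
    have f3 := key (2 * m + 5) 2
    have f4 := key (2 * m + 5) 3
    have g0 := key0 (2 * m + 5)
    have g4 := key (2 * m + 6) 3
    rw [show 2 * (m + 1) + 4 = 2 * m + 6 by ring, show 2 * (m + 1) + 5 = 2 * m + 7 by ring]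
    norm_num [add_assoc] at *
    omega

/-- For n ≥ 4, ν₂(S(n,4)) = 1 if n is odd and = 0 if n is even. -/
theorem nu2_stirling_four (n : ℕ) (hn : 4 ≤ n) :
    (Odd n → padicValNat 2 (stirling2 n 4) = 1) ∧
    (Even n → padicValNat 2 (stirling2 n 4) = 0) := by
  constructor
  · rintro ⟨k, hk⟩
    obtain ⟨m, rfl⟩ : ∃ m, n = 2 * m + 5 := ⟨k - 2, by omega⟩
    have h := (stirling2_inv m).2.2.2.2.2
    obtain ⟨t, ht⟩ : ∃ t, stirling2 (2 * m + 5) 4 = 2 * t := ⟨stirling2 (2 * m + 5) 4 / 2, by omega⟩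
    have : ¬ 2 ∣ t := by omega
    rw [ht, padicValNat.mul (by norm_num) (by omega), padicValNat.self (by norm_num),
      padicValNat.eq_zero_of_not_dvd this]
  · rintro ⟨k, hk⟩
    obtain ⟨m, rfl⟩ : ∃ m, n = 2 * m + 4 := ⟨k - 2, by omega⟩
    have h := (stirling2_inv m).2.2.2.2.1
    exact padicValNat.eq_zero_of_not_dvd (by omega)
end

section
/- For every integer n ≥ 1, ν₂(S(4n+1, 5)) = 0 and ν₂(S(4n+2, 5)) = 0; that is, both S(4n+1,5) and S(4n+2,5) are odd. -/
theorem stirling2_succ_aux (m k : ℕ) :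
    stirling2 (m + 1) (k + 1) = stirling2 m k + (k + 1) * stirling2 m (k + 1) := by
  rw [stirling2]

/-- The residues mod 2 of S(m,1),…,S(m,5) at m = 4n+5 do not depend on n. -/
theorem stirling2_residues_aux (n : ℕ) :
    stirling2 (4 * n + 5) 0 = 0 ∧ stirling2 (4 * n + 5) 1 % 2 = 1 ∧
    stirling2 (4 * n + 5) 2 % 2 = 1 ∧ stirling2 (4 * n + 5) 3 % 2 = 1 ∧
    stirling2 (4 * n + 5) 4 % 2 = 0 ∧ stirling2 (4 * n + 5) 5 % 2 = 1 := by
  induction n with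
  | zero => simp [stirling2]
  | succ n ih =>
    have e : 4 * (n + 1) + 5 = 4 * n + 5 + 1 + 1 + 1 + 1 := by ring
    rw [e]
    generalize 4 * n + 5 = m at ih ⊢
    have h0 : ∀ j, stirling2 (j + 1) 0 = 0 := fun j => by rw [stirling2]
    have h1 := fun j => stirling2_succ_aux j 0
    have h2 := fun j => stirling2_succ_aux j 1
    have h3 := fun j => stirling2_succ_aux j 2
    have h4 := fun j => stirling2_succ_aux j 3
    have h5 := fun j => stirling2_succ_aux j 4
    norm_num only at h1 h2 h3 h4 h5
    simp only [h0, h1, h2, h3, h4, h5]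
    obtain ⟨i0, i1, i2, i3, i4, i5⟩ := ih
    refine ⟨trivial, ?_, ?_, ?_, ?_, ?_⟩ <;> omega

/-- For n ≥ 1, ν₂(S(4n+1,5)) = 0 and ν₂(S(4n+2,5)) = 0. -/
theorem nu2_stirling_five_4n (n : ℕ) (hn : 1 ≤ n) :
    padicValNat 2 (stirling2 (4 * n + 1) 5) = 0 ∧
    padicValNat 2 (stirling2 (4 * n + 2) 5) = 0 := by
  obtain ⟨k, rfl⟩ : ∃ k, n = k + 1 := ⟨n - 1, by omega⟩
  have h := stirling2_residues_aux k
  have e1 : 4 * (k + 1) + 1 = 4 * k + 5 := by ring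
  have e2 : 4 * (k + 1) + 2 = 4 * k + 5 + 1 := by ring
  have h5 := stirling2_succ_aux (4 * k + 5) 4
  norm_num only at h5
  rw [e1, e2]
  constructor
  · exact padicValNat.eq_zero_of_not_dvd (by omega)
  · refine padicValNat.eq_zero_of_not_dvd ?_
    rw [stirling2_succ_aux]
    norm_num only
    omega
end

section
/- For every integer i ≥ 1, ν₂(S(8i, 5)) = 1. -/
theorem stirling2_step (n k : ℕ) :
    stirling2 (n + 1) (k + 1) = stirling2 n k + (k + 1) * stirling2 n (k + 1) := by
  rw [stirling2]

theorem stirling2_succ_zero (n : ℕ) : stirling2 (n + 1) 0 = 0 := by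
  rw [stirling2]

/-- The residues mod 4 of `S(8(j+1), k)`, `k = 1, …, 5`, do not depend on `j`. -/
theorem stirling2_mod_four (j : ℕ) :
    stirling2 (8 * j + 8) 1 % 4 = 1 ∧ stirling2 (8 * j + 8) 2 % 4 = 3 ∧
    stirling2 (8 * j + 8) 3 % 4 = 2 ∧ stirling2 (8 * j + 8) 4 % 4 = 1 ∧
    stirling2 (8 * j + 8) 5 % 4 = 2 := by
  induction j with
  | zero => simp [stirling2]
  | succ j ih =>
    have e : 8 * (j + 1) + 8 = 8 * j + 7 + 1 + 1 + 1 + 1 + 1 + 1 + 1 + 1 + 1 := by ring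
    rw [e]
    have h0 := stirling2_succ_zero (8 * j + 7)
    change stirling2 (8 * j + 7 + 1) 1 % 4 = 1 ∧ stirling2 (8 * j + 7 + 1) 2 % 4 = 3 ∧
      stirling2 (8 * j + 7 + 1) 3 % 4 = 2 ∧ stirling2 (8 * j + 7 + 1) 4 % 4 = 1 ∧
      stirling2 (8 * j + 7 + 1) 5 % 4 = 2 at ih
    generalize 8 * j + 7 + 1 = m at *
    have step (n : ℕ) := And.intro (stirling2_step n 0) <| And.intro (stirling2_step n 1) <|
      And.intro (stirling2_step n 2) <| And.intro (stirling2_step n 3) (stirling2_step n 4)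
    norm_num only at step
    have z (n : ℕ) := stirling2_succ_zero n
    simp only [step, z, h0]
    omega

/-- For i ≥ 1, ν₂(S(8i,5)) = 1. -/
theorem nu2_stirling_five_8i (i : ℕ) (hi : 1 ≤ i) :
    padicValNat 2 (stirling2 (8 * i) 5) = 1 := by
  obtain ⟨j, rfl⟩ : ∃ j, i = j + 1 := ⟨i - 1, by omega⟩
  have h := (stirling2_mod_four j).2.2.2.2
  rw [show 8 * (j + 1) = 8 * j + 8 by ring]
  generalize stirling2 (8 * j + 8) 5 = N at *
  obtain ⟨q, rfl⟩ : ∃ q, N = 2 * q := ⟨N / 2, by omega⟩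
  have hq : ¬ 2 ∣ q := by omega
  rw [padicValNat.mul (by norm_num) (by omega), padicValNat.self (by norm_num),
    padicValNat.eq_zero_of_not_dvd hq]
end

section
/- For every integer i ≥ 1, ν₂(S(8i+3, 5)) = 1 and ν₂(S(8i+7, 5)) ≥ 2; that is, S(8i+3,5) is exactly divisible by 2, and 4 divides S(8i+7,5). -/
theorem stirling2_four_steps (n : ℕ) (h1 : stirling2 n 1 = 1) (h0 : stirling2 n 0 = 0) :
    stirling2 (n + 4) 0 = 0 ∧ stirling2 (n + 4) 1 = 1 ∧
    stirling2 (n + 4) 2 = 15 + 16 * stirling2 n 2 ∧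
    stirling2 (n + 4) 3 = 25 + 65 * stirling2 n 2 + 81 * stirling2 n 3 ∧
    stirling2 (n + 4) 4 = 10 + 55 * stirling2 n 2 + 175 * stirling2 n 3 + 256 * stirling2 n 4 ∧
    stirling2 (n + 4) 5 =
      1 + 14 * stirling2 n 2 + 97 * stirling2 n 3 + 369 * stirling2 n 4
        + 625 * stirling2 n 5 := by
  have z : ∀ m, stirling2 (m + 1) 0 = 0 := fun m => by rw [stirling2]
  have e1 := fun m => stirling2_step m 0
  have e2 := fun m => stirling2_step m 1
  have e3 := fun m => stirling2_step m 2
  have e4 := fun m => stirling2_step m 3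
  have e5 := fun m => stirling2_step m 4
  norm_num at e1 e2 e3 e4 e5
  have a : n + 4 = n + 1 + 1 + 1 + 1 := rfl
  rw [a]
  simp only [e1, e2, e3, e4, e5, z, h1, h0]
  norm_num
  refine ⟨?_, ?_, ?_, ?_⟩ <;> ring

theorem stirling2_residues (i : ℕ) :
    stirling2 (8 * i + 11) 0 = 0 ∧ stirling2 (8 * i + 11) 1 = 1 ∧
    stirling2 (8 * i + 11) 2 % 4 = 3 ∧ stirling2 (8 * i + 11) 3 % 4 = 1 ∧
    stirling2 (8 * i + 11) 4 % 4 = 2 ∧ stirling2 (8 * i + 11) 5 % 4 = 2 := by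
  induction i with
  | zero => simp [stirling2]
  | succ i ih =>
    obtain ⟨h0, h1, h2, h3, h4, h5⟩ := ih
    obtain ⟨g0, g1, g2, g3, g4, g5⟩ := stirling2_four_steps _ h1 h0
    obtain ⟨k0, k1, k2, k3, k4, k5⟩ := stirling2_four_steps _ g1 g0
    have e : 8 * (i + 1) + 11 = 8 * i + 11 + 4 + 4 := by ring
    rw [e]
    omega

/-- For i ≥ 1, ν₂(S(8i+3,5)) = 1 and ν₂(S(8i+7,5)) ≥ 2. -/
theorem nu2_stirling_five_8i3_8i7 (i : ℕ) (hi : 1 ≤ i) :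
    padicValNat 2 (stirling2 (8 * i + 3) 5) = 1 ∧
    2 ≤ padicValNat 2 (stirling2 (8 * i + 7) 5) := by
  obtain ⟨j, rfl⟩ : ∃ j, i = j + 1 := ⟨i - 1, by omega⟩
  obtain ⟨h0, h1, h2, h3, h4, h5⟩ := stirling2_residues j
  obtain ⟨g0, g1, g2, g3, g4, g5⟩ := stirling2_four_steps _ h1 h0
  have e : 8 * (j + 1) + 3 = 8 * j + 11 := by ring
  have e' : 8 * (j + 1) + 7 = 8 * j + 11 + 4 := by ring
  rw [e, e']
  have : Fact (Nat.Prime 2) := ⟨Nat.prime_two⟩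
  constructor
  · have a : 1 ≤ padicValNat 2 (stirling2 (8 * j + 11) 5) :=
      (padicValNat_dvd_iff_le (by omega)).1 (by omega)
    have b : ¬ 2 ≤ padicValNat 2 (stirling2 (8 * j + 11) 5) := fun h => by
      have := (padicValNat_dvd_iff_le (p := 2) (by omega)).2 h
      omega
    omega
  · exact (padicValNat_dvd_iff_le (by omega)).1 (by omega)
end

section
/- For every integer i ≥ 1, ν₂(S(16i+4, 5)) = 2. -/
/-- The residues mod 8 of `S(n,0..5)`, where `S(n,0) = 0`. -/
def StirState (n a b c d e : ℕ) : Prop :=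
  stirling2 n 0 = 0 ∧ stirling2 n 1 % 8 = a ∧ stirling2 n 2 % 8 = b ∧ stirling2 n 3 % 8 = c ∧
    stirling2 n 4 % 8 = d ∧ stirling2 n 5 % 8 = e

theorem StirState.step {n a b c d e : ℕ} (h : StirState n a b c d e) :
    StirState (n + 1) (a % 8) ((a + 2 * b) % 8) ((b + 3 * c) % 8) ((c + 4 * d) % 8)
      ((d + 5 * e) % 8) := by
  obtain ⟨h0, h1, h2, h3, h4, h5⟩ := h
  simp only [StirState, stirling2, Nat.reduceAdd]
  refine ⟨trivial, ?_, ?_, ?_, ?_, ?_⟩ <;> omega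

theorem stirState_one : StirState 1 1 0 0 0 0 := by
  simp [StirState, stirling2]

theorem stirState_twenty : StirState 20 1 7 6 5 4 := by
  have h2 : StirState 2 1 1 0 0 0 := stirState_one.step
  have h3 : StirState 3 1 3 1 0 0 := h2.step
  have h4 : StirState 4 1 7 6 1 0 := h3.step
  have h5 : StirState 5 1 7 1 2 1 := h4.step
  have h6 : StirState 6 1 7 2 1 7 := h5.step
  have h7 : StirState 7 1 7 5 6 4 := h6.step
  have h8 : StirState 8 1 7 6 5 2 := h7.step
  have h9 : StirState 9 1 7 1 2 7 := h8.step
  have h10 : StirState 10 1 7 2 1 5 := h9.step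
  have h11 : StirState 11 1 7 5 6 2 := h10.step
  have h12 : StirState 12 1 7 6 5 0 := h11.step
  have h13 : StirState 13 1 7 1 2 5 := h12.step
  have h14 : StirState 14 1 7 2 1 3 := h13.step
  have h15 : StirState 15 1 7 5 6 0 := h14.step
  have h16 : StirState 16 1 7 6 5 6 := h15.step
  have h17 : StirState 17 1 7 1 2 3 := h16.step
  have h18 : StirState 18 1 7 2 1 1 := h17.step
  have h19 : StirState 19 1 7 5 6 6 := h18.step
  have h20 : StirState 20 1 7 6 5 4 := h19.step
  exact h20

theorem stirState_main (i : ℕ) : StirState (16 * i + 20) 1 7 6 5 4 := by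
  induction i with
  | zero => exact stirState_twenty
  | succ k h20 =>
    have h21 : StirState (16 * k + 21) 1 7 1 2 1 := h20.step
    have h22 : StirState (16 * k + 22) 1 7 2 1 7 := h21.step
    have h23 : StirState (16 * k + 23) 1 7 5 6 4 := h22.step
    have h24 : StirState (16 * k + 24) 1 7 6 5 2 := h23.step
    have h25 : StirState (16 * k + 25) 1 7 1 2 7 := h24.step
    have h26 : StirState (16 * k + 26) 1 7 2 1 5 := h25.step
    have h27 : StirState (16 * k + 27) 1 7 5 6 2 := h26.step
    have h28 : StirState (16 * k + 28) 1 7 6 5 0 := h27.step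
    have h29 : StirState (16 * k + 29) 1 7 1 2 5 := h28.step
    have h30 : StirState (16 * k + 30) 1 7 2 1 3 := h29.step
    have h31 : StirState (16 * k + 31) 1 7 5 6 0 := h30.step
    have h32 : StirState (16 * k + 32) 1 7 6 5 6 := h31.step
    have h33 : StirState (16 * k + 33) 1 7 1 2 3 := h32.step
    have h34 : StirState (16 * k + 34) 1 7 2 1 1 := h33.step
    have h35 : StirState (16 * k + 35) 1 7 5 6 6 := h34.step
    have h36 : StirState (16 * k + 36) 1 7 6 5 4 := h35.step
    exact h36

/-- For i ≥ 1, ν₂(S(16i+4,5)) = 2. -/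
theorem nu2_stirling_five_16i4 (i : ℕ) (hi : 1 ≤ i) :
    padicValNat 2 (stirling2 (16 * i + 4) 5) = 2 := by
  obtain ⟨k, rfl⟩ : ∃ k, i = k + 1 := ⟨i - 1, by omega⟩
  obtain ⟨-, -, -, -, -, h⟩ := stirState_main k
  rw [show 16 * (k + 1) + 4 = 16 * k + 20 by ring]
  generalize stirling2 (16 * k + 20) 5 = x at h
  obtain ⟨m, rfl⟩ : ∃ m, x = 2 ^ 2 * (2 * m + 1) := ⟨x / 8, by omega⟩
  rw [padicValNat.mul (by norm_num) (by omega), padicValNat.prime_pow,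
    padicValNat.eq_zero_of_not_dvd (by omega)]
end

section
/- Let m ≥ 1, n ≥ 1, and k ≥ 0 be integers with 2^{m+1}·n + k ≥ 5. Set X = S(2^{m+1}·n + k + 2^m, 5) and Y = S(2^{m+1}·n + k, 5). If ν₂(X) ≥ m − 1 and ν₂(Y) ≥ m − 1, then exactly one of ν₂(X), ν₂(Y) equals m − 1, and the other is at least m. -/
theorem st_pos (k : ℕ) : ∀ n, k + 1 ≤ n → 0 < stirling2 n (k + 1) := by
  induction k with
  | zero =>
    intro n hn
    induction n, hn using Nat.le_induction with
    | base => simp [stirling2]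
    | succ n hn ih => simp only [stirling2]; omega
  | succ k ih =>
    intro n hn
    obtain ⟨p, rfl⟩ : ∃ p, n = p + 1 := ⟨n - 1, by omega⟩
    have := ih p (by omega)
    simp only [stirling2] at this ⊢
    omega

theorem st_formula (n : ℕ) :
    (stirling2 (n + 1) 1 : ℤ) = 1 ∧
    (2 * stirling2 (n + 1) 2 : ℤ) = 2 ^ (n + 1) - 2 ∧
    (6 * stirling2 (n + 1) 3 : ℤ) = 3 ^ (n + 1) - 3 * 2 ^ (n + 1) + 3 ∧
    (24 * stirling2 (n + 1) 4 : ℤ) = 4 ^ (n + 1) - 4 * 3 ^ (n + 1) + 6 * 2 ^ (n + 1) - 4 ∧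
    (120 * stirling2 (n + 1) 5 : ℤ) =
      5 ^ (n + 1) - 5 * 4 ^ (n + 1) + 10 * 3 ^ (n + 1) - 10 * 2 ^ (n + 1) + 5 := by
  induction n with
  | zero => simp [stirling2]
  | succ n ih =>
    obtain ⟨h1, h2, h3, h4, h5⟩ := ih
    have e0 : stirling2 (n + 1) 0 = 0 := by simp [stirling2]
    have r (k : ℕ) : stirling2 (n + 1 + 1) (k + 1)
      = stirling2 (n + 1) k + (k + 1) * stirling2 (n + 1) (k + 1) := by simp only [stirling2]
    rw [r 0, r 1, r 2, r 3, r 4, e0]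
    push_cast
    simp only [pow_succ _ (n + 1)]
    norm_num
    refine ⟨by exact_mod_cast h1, ?_, ?_, ?_, ?_⟩ <;> linarith

theorem pow_five (j : ℕ) : ∃ c : ℤ, (5 : ℤ) ^ (2 ^ (j + 1)) = 1 + 2 ^ (j + 3) * (2 * c + 1) := by
  induction j with
  | zero => exact ⟨1, by norm_num⟩
  | succ j ih =>
    obtain ⟨c, hc⟩ := ih
    refine ⟨c + 2 ^ (j + 1) * (2 * c + 1) ^ 2, ?_⟩
    rw [pow_succ 2 (j + 1), pow_mul, hc]
    ring

theorem pow_three_aux (j : ℕ) : ∃ c : ℤ, (3 : ℤ) ^ (2 ^ (j + 1)) = 1 + 2 ^ (j + 3) * c := by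
  induction j with
  | zero => exact ⟨1, by norm_num⟩
  | succ j ih =>
    obtain ⟨c, hc⟩ := ih
    refine ⟨c + 2 ^ (j + 2) * c ^ 2, ?_⟩
    rw [pow_succ 2 (j + 1), pow_mul, hc]
    ring

theorem diff_key (j N : ℕ) (hN : j + 3 ≤ N) : ∃ t : ℤ,
    15 * ((stirling2 (N + 2 ^ (j + 1)) 5 : ℤ) - stirling2 N 5) = 2 ^ j * (2 * t + 1) := by
  obtain ⟨a, ha⟩ := pow_five j
  obtain ⟨b, hb⟩ := pow_three_aux j
  have f (M : ℕ) (h : 1 ≤ M) : (120 * stirling2 M 5 : ℤ) =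
      5 ^ M - 5 * 4 ^ M + 10 * 3 ^ M - 10 * 2 ^ M + 5 := by
    obtain ⟨p, rfl⟩ : ∃ p, M = p + 1 := ⟨M - 1, by omega⟩
    exact (st_formula p).2.2.2.2
  have f1 := f N (by omega)
  have f2 := f (N + 2 ^ (j + 1)) (le_trans (by omega : 1 ≤ N) (Nat.le_add_right _ _))
  obtain ⟨u, hu⟩ : ∃ u : ℤ, (5 : ℤ) ^ N = 2 * u + 1 := (Odd.pow (by decide) : Odd ((5 : ℤ) ^ N))
  obtain ⟨q, rfl⟩ : ∃ q, N = j + 3 + q := ⟨N - (j + 3), by omega⟩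
  simp only [pow_add _ (j + 3 + q) (2 ^ (j + 1))] at f2
  rw [ha, hb] at f2
  rw [hu] at f1 f2
  have h4 : (4 : ℤ) ^ (j + 3 + q) = 2 ^ j * 8 * 2 ^ q * (2 * (2 ^ (j + 2 + q))) := by
    rw [show (4 : ℤ) = 2 * 2 by norm_num, mul_pow]; ring
  have h2 : (2 : ℤ) ^ (j + 3 + q) = 2 ^ j * 8 * 2 ^ q := by ring
  have h3 : (2 : ℤ) ^ (j + 3) = 2 ^ j * 8 := by ring
  rw [h4, h2] at f1 f2
  rw [h3] at f2
  refine ⟨u * (2 * a + 1) + a - 5 * 2 ^ q * 2 ^ (j + 2 + q) * (4 ^ 2 ^ (j + 1) - 1)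
    + 5 * 3 ^ (j + 3 + q) * b - 5 * 2 ^ q * (2 ^ 2 ^ (j + 1) - 1), ?_⟩
  have h8 : (8 : ℤ) ≠ 0 := by norm_num
  apply mul_left_cancel₀ h8
  linear_combination f2 - f1

theorem le_val {j x : ℕ} (hx : 0 < x) : j ≤ padicValNat 2 x ↔ 2 ^ j ∣ x :=
  (padicValNat_dvd_iff_le (p := 2) hx.ne').symm

theorem split_aux (j X Y : ℕ) (hX0 : 0 < X) (hY0 : 0 < Y)
    (hX : j ≤ padicValNat 2 X) (hY : j ≤ padicValNat 2 Y)
    (h : ∃ t : ℤ, 15 * ((X : ℤ) - Y) = 2 ^ j * (2 * t + 1)) :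
    (padicValNat 2 X = j ∧ j + 1 ≤ padicValNat 2 Y) ∨
    (padicValNat 2 Y = j ∧ j + 1 ≤ padicValNat 2 X) := by
  have key : ¬ (2 ^ (j + 1) ∣ X) ∧ 2 ^ (j + 1) ∣ Y ∨ ¬ (2 ^ (j + 1) ∣ Y) ∧ 2 ^ (j + 1) ∣ X := by
    obtain ⟨x, rfl⟩ := (le_val hX0).1 hX
    obtain ⟨y, rfl⟩ := (le_val hY0).1 hY
    obtain ⟨t, ht⟩ := h
    have hp : 0 < 2 ^ j := by positivity
    have hz : (2 : ℤ) ^ j ≠ 0 := by positivity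
    have e : 15 * ((x : ℤ) - y) = 2 * t + 1 := by
      apply mul_left_cancel₀ hz
      push_cast at ht
      linear_combination ht
    rw [pow_succ, Nat.mul_dvd_mul_iff_left hp, Nat.mul_dvd_mul_iff_left hp]
    omega
  rw [← le_val hX0, ← le_val hY0] at key
  omega

/-- The splitting step: for m, n ≥ 1 and k ≥ 0 with 2^{m+1}n + k ≥ 5, if
X = S(2^{m+1}n + k + 2^m, 5) and Y = S(2^{m+1}n + k, 5) both have 2-adic valuation
at least m − 1, then exactly one of them has valuation m − 1 and the other has
valuation at least m. -/
theorem stirling_five_splitting (m n k : ℕ) (hm : 1 ≤ m) (hn : 1 ≤ n)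
    (h5 : 5 ≤ 2 ^ (m + 1) * n + k)
    (hX : m - 1 ≤ padicValNat 2 (stirling2 (2 ^ (m + 1) * n + k + 2 ^ m) 5))
    (hY : m - 1 ≤ padicValNat 2 (stirling2 (2 ^ (m + 1) * n + k) 5)) :
    (padicValNat 2 (stirling2 (2 ^ (m + 1) * n + k + 2 ^ m) 5) = m - 1 ∧
      m ≤ padicValNat 2 (stirling2 (2 ^ (m + 1) * n + k) 5)) ∨
    (padicValNat 2 (stirling2 (2 ^ (m + 1) * n + k) 5) = m - 1 ∧
      m ≤ padicValNat 2 (stirling2 (2 ^ (m + 1) * n + k + 2 ^ m) 5)) := by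
  obtain ⟨j, rfl⟩ : ∃ j, m = j + 1 := ⟨m - 1, by omega⟩
  have hN : j + 3 ≤ 2 ^ (j + 1 + 1) * n + k := by
    have h1 : j + 1 + 1 < 2 ^ (j + 1 + 1) := Nat.lt_two_pow_self
    have h2 : 2 ^ (j + 1 + 1) ≤ 2 ^ (j + 1 + 1) * n := Nat.le_mul_of_pos_right _ hn
    omega
  simp only [Nat.add_sub_cancel] at hX hY ⊢
  exact split_aux j _ _ (st_pos 4 _ (h5.trans (Nat.le_add_right _ _))) (st_pos 4 _ h5) hX hY (diff_key j _ hN)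
end
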